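/- arXiv:math/0405163 — 7 statements merged into one kernel-verified Lean document; each statement's English description precedes it below -/
import Mathlib

section
/- Let C be a nonempty closed convex subset of a Banach space E and let T be a nonexpansive mapping on C. If T satisfies condition (C2), then T satisfies condition (C1). -/
/-!
If `dist (f x₀) (f y) ≤ r * dist x₀ y`, then replacing `x₀` by `x₁` changes both sides by an amount
bounded independently of `y`. Once `y` is far enough away, any slack `(s - r) * dist x₁ y` with
`r < s` absorbs this amount, so every constant `s ∈ (r, 1)` serves all points `x₁` at once, and only
the distance `η` depends on `x₁`.
-/

open Bornology Filter Set

theorem eventually_dist_map_le_mul_dist_of_lt {X Y : Type*} [PseudoMetricSpace X]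
    [PseudoMetricSpace Y] {f : X → Y} {l : Filter X} (hl : l ≤ cobounded X) {r s : ℝ} (hr : 0 ≤ r)
    (hrs : r < s) {x₀ : X} (hx₀ : ∀ᶠ y in l, dist (f x₀) (f y) ≤ r * dist x₀ y) (x₁ : X) :
    ∀ᶠ y in l, dist (f x₁) (f y) ≤ s * dist x₁ y := by
  have slack_atTop : Tendsto (fun y ↦ (s - r) * dist x₁ y) l atTop :=
    ((Metric.tendsto_dist_left_cobounded_atTop x₁).mono_left hl).const_mul_atTop (sub_pos.2 hrs)
  filter_upwards [hx₀, slack_atTop.eventually_ge_atTop (dist (f x₁) (f x₀) + r * dist x₀ x₁)]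
    with y hy hslack
  calc
    dist (f x₁) (f y) ≤ dist (f x₁) (f x₀) + dist (f x₀) (f y) := dist_triangle _ _ _
    _ ≤ dist (f x₁) (f x₀) + r * dist x₀ y := by gcongr
    _ ≤ dist (f x₁) (f x₀) + r * (dist x₀ x₁ + dist x₁ y) := by
      gcongr
      exact dist_triangle _ _ _
    _ = (dist (f x₁) (f x₀) + r * dist x₀ x₁) + r * dist x₁ y := by ring
    _ ≤ (s - r) * dist x₁ y + r * dist x₁ y := by gcongr
    _ = s * dist x₁ y := by ring

theorem eventually_cobounded_inf_principal_iff {E : Type*} [SeminormedAddGroup E] {C : Set E}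
    {p : E → Prop} :
    (∀ᶠ y in cobounded E ⊓ 𝓟 C, p y) ↔ ∃ η > (0 : ℝ), ∀ y ∈ C, η < ‖y‖ → p y := by
  rw [← comap_norm_atTop, (((atTop_basis_Ioi' (0 : ℝ)).comap norm).inf_principal C).eventually_iff]
  simp only [mem_inter_iff, mem_preimage, mem_Ioi, and_imp, gt_iff_lt]
  exact exists_congr fun _ ↦ and_congr_right fun _ ↦ forall_congr' fun _ ↦ forall_comm

theorem c2_implies_c1_general {E F : Type*} [SeminormedAddCommGroup E] [SeminormedAddCommGroup F]
    {C : Set E} {T : E → F}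
    (hC2 : ∃ r ∈ Ioo (0 : ℝ) 1, ∃ x₀, ∃ η > (0 : ℝ),
      ∀ y ∈ C, η < ‖y‖ → ‖T x₀ - T y‖ ≤ r * ‖x₀ - y‖) :
    ∃ r ∈ Ioo (0 : ℝ) 1, ∀ x₁, ∃ η > (0 : ℝ),
      ∀ y ∈ C, η < ‖y‖ → ‖T x₁ - T y‖ ≤ r * ‖x₁ - y‖ := by
  simp only [← eventually_cobounded_inf_principal_iff, ← dist_eq_norm] at hC2 ⊢
  obtain ⟨r, ⟨hr0, hr1⟩, x₀, hx₀⟩ := hC2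
  obtain ⟨s, hrs, hs1⟩ := exists_between hr1
  exact ⟨s, ⟨hr0.trans hrs, hs1⟩,
    eventually_dist_map_le_mul_dist_of_lt inf_le_left hr0.le hrs hx₀⟩

/-- Proposition 1 (part): (C2) ⇒ (C1) for a nonexpansive mapping on a nonempty
closed convex subset of a Banach space. -/
theorem c2_implies_c1
    {E : Type*} [NormedAddCommGroup E] [NormedSpace ℝ E] [CompleteSpace E]
    (C : Set E) (hCne : C.Nonempty) (hCcl : IsClosed C) (hCcv : Convex ℝ C)
    (T : E → E) (hTC : Set.MapsTo T C C)
    (hTne : ∀ x ∈ C, ∀ y ∈ C, ‖T x - T y‖ ≤ ‖x - y‖)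
    (hC2 : ∃ r ∈ Set.Ioo (0 : ℝ) 1, ∃ x₀ ∈ C, ∃ η > (0 : ℝ),
      ∀ y ∈ C, η < ‖y‖ → ‖T x₀ - T y‖ ≤ r * ‖x₀ - y‖) :
    ∃ r ∈ Set.Ioo (0 : ℝ) 1, ∀ x₁ ∈ C, ∃ η > (0 : ℝ),
      ∀ y ∈ C, η < ‖y‖ → ‖T x₁ - T y‖ ≤ r * ‖x₁ - y‖ := by
  obtain ⟨r, hr, x₀, -, hx₀⟩ := hC2
  exact (c2_implies_c1_general ⟨r, hr, x₀, hx₀⟩).imp fun _ hs ↦ ⟨hs.1, fun x₁ _ ↦ hs.2 x₁⟩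
end

section
/- Let C be a nonempty closed convex subset of a Banach space E and let T be a nonexpansive mapping on C. If T satisfies condition (C2), then T satisfies condition (C4). -/
open Filter Bornology

theorem tendsto_dist_sub_dist_atTop_of_le_mul
    {X Y : Type*} [PseudoMetricSpace X] [PseudoMetricSpace Y]
    {l : Filter X} (hl : l ≤ cobounded X) {T : X → Y} {r : ℝ} (hr : r < 1) {x₀ : X}
    (hT : ∀ᶠ y in l, dist (T x₀) (T y) ≤ r * dist x₀ y) :
    Tendsto (fun y ↦ dist x₀ y - dist (T x₀) (T y)) l atTop := by
  have hdist : Tendsto (dist x₀) l atTop :=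
    (Metric.tendsto_dist_left_cobounded_atTop x₀).mono_left hl
  have hgap : Tendsto (fun y ↦ (1 - r) * dist x₀ y) l atTop :=
    hdist.const_mul_atTop (sub_pos.mpr hr)
  refine tendsto_atTop_mono' l (hT.mono fun y hy ↦ ?_) hgap
  linarith

theorem eventually_cobounded_inf_principal_iff_norm {E : Type*} [SeminormedAddCommGroup E]
    {C : Set E} {p : E → Prop} :
    (∀ᶠ y in cobounded E ⊓ 𝓟 C, p y) ↔ ∃ η > (0 : ℝ), ∀ y ∈ C, η < ‖y‖ → p y := by
  have hbasis := (atTop_basis_Ioi' (0 : ℝ)).comap (norm : E → ℝ)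
  rw [comap_norm_atTop] at hbasis
  rw [eventually_inf_principal, hbasis.eventually_iff]
  exact exists_congr fun η ↦ and_congr_right fun _ ↦ forall_congr' fun y ↦ forall_comm

theorem c2_implies_c4_general {E F : Type*} [SeminormedAddCommGroup E] [SeminormedAddCommGroup F]
    {C : Set E} {T : E → F} {r : ℝ} (hr : r < 1) {x₀ : E}
    (hT : ∃ η > (0 : ℝ), ∀ y ∈ C, η < ‖y‖ → ‖T x₀ - T y‖ ≤ r * ‖x₀ - y‖) (lam : ℝ) :
    ∃ η > (0 : ℝ), ∀ y ∈ C, η < ‖y‖ → ‖T x₀ - T y‖ ≤ ‖x₀ - y‖ - lam := by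
  simp only [← eventually_cobounded_inf_principal_iff_norm, ← dist_eq_norm] at hT ⊢
  have hgap := tendsto_dist_sub_dist_atTop_of_le_mul inf_le_left hr hT
  exact (hgap.eventually_ge_atTop lam).mono fun _ ↦ le_sub_comm.mp

/-- Proposition 1 (part): (C2) ⇒ (C4) for a nonexpansive mapping on a nonempty
closed convex subset of a Banach space. -/
theorem c2_implies_c4
    {E : Type*} [NormedAddCommGroup E] [NormedSpace ℝ E] [CompleteSpace E]
    (C : Set E) (hCne : C.Nonempty) (hCcl : IsClosed C) (hCcv : Convex ℝ C)
    (T : E → E) (hTC : Set.MapsTo T C C)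
    (hTne : ∀ x ∈ C, ∀ y ∈ C, ‖T x - T y‖ ≤ ‖x - y‖)
    (hC2 : ∃ r ∈ Set.Ioo (0 : ℝ) 1, ∃ x₀ ∈ C, ∃ η > (0 : ℝ),
      ∀ y ∈ C, η < ‖y‖ → ‖T x₀ - T y‖ ≤ r * ‖x₀ - y‖) :
    ∃ x₀ ∈ C, ∀ lam > (0 : ℝ), ∃ η > (0 : ℝ),
      ∀ y ∈ C, η < ‖y‖ → ‖T x₀ - T y‖ ≤ ‖x₀ - y‖ - lam := by
  obtain ⟨r, ⟨-, hr⟩, x₀, hx₀, hT⟩ := hC2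
  exact ⟨x₀, hx₀, fun lam _ ↦ c2_implies_c4_general hr hT lam⟩
end

section
/- Let C be a nonempty closed convex subset of a Banach space E and let T be a nonexpansive mapping on C. If T satisfies condition (C4), then T satisfies condition (C3). -/
theorem dist_sub_dist_map_le_add {X Y : Type*} [PseudoMetricSpace X] [PseudoMetricSpace Y]
    (f : X → Y) (x₀ x₁ y : X) :
    dist x₀ y - dist (f x₀) (f y) ≤
      dist x₁ y - dist (f x₁) (f y) + (dist x₀ x₁ + dist (f x₀) (f x₁)) := by
  have hdom : dist x₀ y ≤ dist x₀ x₁ + dist x₁ y := dist_triangle _ _ _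
  have hcod : dist (f x₁) (f y) ≤ dist (f x₀) (f x₁) + dist (f x₀) (f y) :=
    dist_triangle_left _ _ _
  linarith

theorem c4_implies_c3_general
    {E F : Type*} [SeminormedAddCommGroup E] [SeminormedAddCommGroup F]
    (C : Set E) (T : E → F)
    (hC4 : ∃ x₀, ∀ lam > (0 : ℝ), ∃ η > (0 : ℝ),
      ∀ y ∈ C, η < ‖y‖ → ‖T x₀ - T y‖ ≤ ‖x₀ - y‖ - lam) :
    ∀ lam > (0 : ℝ), ∀ x₁, ∃ η > (0 : ℝ),
      ∀ y ∈ C, η < ‖y‖ → ‖T x₁ - T y‖ ≤ ‖x₁ - y‖ - lam := by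
  simp only [← dist_eq_norm] at hC4 ⊢
  intro lam hlam x₁
  obtain ⟨x₀, hx₀⟩ := hC4
  obtain ⟨η, hη, hfar⟩ := hx₀ (lam + (dist x₀ x₁ + dist (T x₀) (T x₁))) (by positivity)
  refine ⟨η, hη, fun y hyC hηy => ?_⟩
  linarith [hfar y hyC hηy, dist_sub_dist_map_le_add T x₀ x₁ y]

/-- Proposition 1 (part): (C4) ⇒ (C3) for a nonexpansive mapping on a nonempty
closed convex subset of a Banach space. -/
theorem c4_implies_c3
    {E : Type*} [NormedAddCommGroup E] [NormedSpace ℝ E] [CompleteSpace E]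
    (C : Set E) (hCne : C.Nonempty) (hCcl : IsClosed C) (hCcv : Convex ℝ C)
    (T : E → E) (hTC : Set.MapsTo T C C)
    (hTne : ∀ x ∈ C, ∀ y ∈ C, ‖T x - T y‖ ≤ ‖x - y‖)
    (hC4 : ∃ x₀ ∈ C, ∀ lam > (0 : ℝ), ∃ η > (0 : ℝ),
      ∀ y ∈ C, η < ‖y‖ → ‖T x₀ - T y‖ ≤ ‖x₀ - y‖ - lam) :
    ∀ lam > (0 : ℝ), ∀ x₁ ∈ C, ∃ η > (0 : ℝ),
      ∀ y ∈ C, η < ‖y‖ → ‖T x₁ - T y‖ ≤ ‖x₁ - y‖ - lam := by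
  obtain ⟨x₀, -, hx₀⟩ := hC4
  exact fun lam hlam x₁ _ => c4_implies_c3_general C T ⟨x₀, hx₀⟩ lam hlam x₁
end

section
/- Let C be a nonempty closed convex subset of a Banach space E and let T be a nonexpansive mapping on C. If T satisfies condition (C5), then T satisfies condition (C6). -/
/-!
Let `d` be the infimum of `‖T x - x‖` over `C`, and fix `u ∈ C`. For small `s > 0` the contraction
`x ↦ (1 - s) • T x + s • u` has almost fixed points `x`, and these lie almost on the segment from
`u` to `T x`, at distance about `s * ‖T x - u‖` from `T x`. If `x` stays in a fixed ball, then
`‖T x - x‖` is of order `s`. If `x` is far away, then (C5) at `u` gives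
`‖T x - x‖ ≈ ‖T x - u‖ - ‖u - x‖ ≤ ‖T u - u‖ + ‖T u - T x‖ - ‖u - x‖ ≤ ‖T u - u‖ - λ`.
Hence `d ≤ max 0 (‖T u - u‖ - λ)`, and choosing `u` with `‖T u - u‖ < d + λ` forces `d = 0`. Any
`x₀` with `‖T x₀ - x₀‖ < λ` then witnesses (C6).
-/

theorem exists_dist_apply_lt_of_lipschitzWith {X : Type*} [PseudoMetricSpace X] [Nonempty X]
    {K : NNReal} (hK : K < 1) {f : X → X} (hf : LipschitzWith K f) {ε : ℝ} (hε : 0 < ε) :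
    ∃ x, dist x (f x) < ε := by
  obtain ⟨x⟩ := ‹Nonempty X›
  have hlim : Filter.Tendsto (fun n : ℕ => dist x (f x) * (K : ℝ) ^ n) Filter.atTop (nhds 0) := by
    simpa only [mul_zero] using
      (tendsto_pow_atTop_nhds_zero_of_lt_one K.coe_nonneg hK).const_mul (dist x (f x))
  obtain ⟨n, hn⟩ := (hlim.eventually_lt_const hε).exists
  refine ⟨f^[n] x, ?_⟩
  rw [← Function.iterate_succ_apply' f]
  exact (hf.dist_iterate_succ_le_geometric x n).trans_lt hn

section Displacement

variable {E : Type*} [SeminormedAddCommGroup E] {C : Set E} {T : E → E}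

/-- The minimal displacement of `T` on `C`, the infimum of `‖T x - x‖` over `x ∈ C`; it need not be
attained, and it is `0` by convention when `C` is empty. -/
noncomputable def minimalDisplacement (T : E → E) (C : Set E) : ℝ :=
  ⨅ x : C, ‖T x - x‖

theorem minimalDisplacement_le {x : E} (hx : x ∈ C) : minimalDisplacement T C ≤ ‖T x - x‖ :=
  ciInf_le (f := fun x : C => ‖T x - x‖) ⟨0, Set.forall_mem_range.2 fun _ => norm_nonneg _⟩ ⟨x, hx⟩

theorem exists_norm_apply_sub_lt_of_minimalDisplacement_lt (hC : C.Nonempty) {r : ℝ}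
    (hr : minimalDisplacement T C < r) : ∃ x ∈ C, ‖T x - x‖ < r := by
  have : Nonempty C := hC.to_subtype
  obtain ⟨x, hx⟩ := exists_lt_of_ciInf_lt hr
  exact ⟨x, x.2, hx⟩

variable [NormedSpace ℝ E]

theorem exists_norm_smul_add_smul_sub_lt (hC : Convex ℝ C) (hTC : Set.MapsTo T C C)
    (hT : LipschitzOnWith 1 T C) {u : E} (hu : u ∈ C) {s : ℝ} (hs₀ : 0 < s) (hs₁ : s ≤ 1)
    {ε : ℝ} (hε : 0 < ε) : ∃ x ∈ C, ‖(1 - s) • T x + s • u - x‖ < ε := by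
  have hs : 0 ≤ 1 - s := sub_nonneg.2 hs₁
  have : Nonempty C := ⟨⟨u, hu⟩⟩
  let f : C → C := fun x =>
    ⟨(1 - s) • T x + s • u, hC (hTC x.2) hu hs hs₀.le (sub_add_cancel 1 s)⟩
  have hf : LipschitzWith (1 - s).toNNReal f := by
    refine LipschitzWith.of_dist_le_mul fun x y => ?_
    calc dist (f x) (f y) = (1 - s) * dist (T x) (T y) := by
          rw [Subtype.dist_eq, dist_add_right, dist_smul₀, Real.norm_of_nonneg hs]
      _ ≤ (1 - s) * dist (x : E) y := by
          gcongr
          simpa only [NNReal.coe_one, one_mul] using hT.dist_le_mul x x.2 y y.2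
      _ = (1 - s).toNNReal * dist x y := by rw [Real.coe_toNNReal _ hs, Subtype.dist_eq]
  obtain ⟨x, hx⟩ := exists_dist_apply_lt_of_lipschitzWith
    (Real.toNNReal_lt_one.2 (sub_lt_self 1 hs₀)) hf hε
  refine ⟨x, x.2, ?_⟩
  rwa [dist_comm, Subtype.dist_eq, dist_eq_norm] at hx

theorem exists_norm_apply_sub_le_and_norm_sub_le (hC : Convex ℝ C) (hTC : Set.MapsTo T C C)
    (hT : LipschitzOnWith 1 T C) {u : E} (hu : u ∈ C) {s : ℝ} (hs₀ : 0 < s) (hs₁ : s ≤ 1)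
    {ε : ℝ} (hε : 0 < ε) :
    ∃ x ∈ C, ‖T x - x‖ ≤ s * ‖T x - u‖ + ε ∧ ‖u - x‖ ≤ (1 - s) * ‖T x - u‖ + ε := by
  obtain ⟨x, hx, hlt⟩ := exists_norm_smul_add_smul_sub_lt hC hTC hT hu hs₀ hs₁ hε
  set r : E := (1 - s) • T x + s • u - x with hr
  refine ⟨x, hx, ?_, ?_⟩
  · calc ‖T x - x‖ = ‖s • (T x - u) + r‖ := by rw [hr]; congr 1; module
      _ ≤ ‖s • (T x - u)‖ + ‖r‖ := norm_add_le _ _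
      _ ≤ s * ‖T x - u‖ + ε := by rw [norm_smul_of_nonneg hs₀.le]; gcongr
  · calc ‖u - x‖ = ‖(1 - s) • (u - T x) + r‖ := by rw [hr]; congr 1; module
      _ ≤ ‖(1 - s) • (u - T x)‖ + ‖r‖ := norm_add_le _ _
      _ ≤ (1 - s) * ‖T x - u‖ + ε := by
        rw [norm_smul_of_nonneg (sub_nonneg.2 hs₁), norm_sub_rev u]; gcongr

theorem minimalDisplacement_le_max_zero_sub (hC : Convex ℝ C) (hTC : Set.MapsTo T C C)
    (hT : LipschitzOnWith 1 T C) {u : E} (hu : u ∈ C) {lam η : ℝ}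
    (hfar : ∀ y ∈ C, η < ‖y‖ → ‖T u - T y‖ ≤ ‖u - y‖ - lam) :
    minimalDisplacement T C ≤ max 0 (‖T u - u‖ - lam) := by
  refine le_of_forall_pos_le_add fun ε hε => ?_
  obtain ⟨c, hc, hcε⟩ := exists_pos_mul_lt (half_pos hε) (η + ‖u‖ + ‖T u - u‖)
  obtain ⟨x, hx, hTx, hux⟩ := exists_norm_apply_sub_le_and_norm_sub_le hC hTC hT hu
    (lt_min hc one_pos) (min_le_right c 1) (half_pos hε)
  refine (minimalDisplacement_le hx).trans ?_
  have htri : ‖T x - u‖ ≤ ‖T u - T x‖ + ‖T u - u‖ := by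
    simpa only [norm_sub_rev (T x)] using norm_sub_le_norm_sub_add_norm_sub (T x) (T u) u
  rcases le_or_gt ‖x‖ η with hnear | hxη
  · have hTux : ‖T u - T x‖ ≤ ‖u - x‖ := by
      simpa only [NNReal.coe_one, one_mul] using hT.norm_sub_le hu hx
    have hbound : ‖T x - u‖ ≤ η + ‖u‖ + ‖T u - u‖ := by
      linarith only [htri, hTux, norm_sub_le u x, hnear]
    calc ‖T x - x‖ ≤ min c 1 * ‖T x - u‖ + ε / 2 := hTx
      _ ≤ c * (η + ‖u‖ + ‖T u - u‖) + ε / 2 := by gcongr; exact min_le_left c 1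
      _ ≤ 0 + ε := by linarith only [hcε]
      _ ≤ max 0 (‖T u - u‖ - lam) + ε := by gcongr; exact le_max_left _ _
  · calc ‖T x - x‖ ≤ ‖T x - u‖ - ‖u - x‖ + ε := by linarith only [hTx, hux]
      _ ≤ ‖T u - u‖ - lam + ε := by linarith only [htri, hfar x hx hxη]
      _ ≤ max 0 (‖T u - u‖ - lam) + ε := by gcongr; exact le_max_right _ _

theorem minimalDisplacement_eq_zero (hCne : C.Nonempty) (hC : Convex ℝ C)
    (hTC : Set.MapsTo T C C) (hT : LipschitzOnWith 1 T C) {lam : ℝ} (hlam : 0 < lam)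
    (hfar : ∀ u ∈ C, ∃ η : ℝ, ∀ y ∈ C, η < ‖y‖ → ‖T u - T y‖ ≤ ‖u - y‖ - lam) :
    minimalDisplacement T C = 0 := by
  refine le_antisymm ?_ (Real.iInf_nonneg fun _ => norm_nonneg _)
  obtain ⟨u, hu, hlt⟩ :=
    exists_norm_apply_sub_lt_of_minimalDisplacement_lt hCne (lt_add_of_pos_right _ hlam)
  obtain ⟨η, hη⟩ := hfar u hu
  refine (le_max_iff.1 (minimalDisplacement_le_max_zero_sub hC hTC hT hu hη)).resolve_right ?_
  exact not_le.2 (sub_lt_iff_lt_add.2 hlt)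

end Displacement

theorem c5_implies_c6_general
    {E : Type*} [SeminormedAddCommGroup E] [NormedSpace ℝ E]
    (C : Set E) (hCne : C.Nonempty) (hCcv : Convex ℝ C)
    (T : E → E) (hTC : Set.MapsTo T C C)
    (hTne : ∀ x ∈ C, ∀ y ∈ C, ‖T x - T y‖ ≤ ‖x - y‖)
    (hC5 : ∃ lam > (0 : ℝ), ∀ x₁ ∈ C, ∃ η > (0 : ℝ),
      ∀ y ∈ C, η < ‖y‖ → ‖T x₁ - T y‖ ≤ ‖x₁ - y‖ - lam) :
    ∃ x₀ ∈ C, ∃ η > (0 : ℝ),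
      ∀ y ∈ C, η < ‖y‖ → ‖T x₀ - T y‖ ≤ ‖x₀ - y‖ - ‖T x₀ - x₀‖ := by
  obtain ⟨lam, hlam, hfar⟩ := hC5
  have hT : LipschitzOnWith 1 T C := LipschitzOnWith.of_dist_le_mul fun x hx y hy => by
    simpa only [NNReal.coe_one, one_mul, dist_eq_norm] using hTne x hx y hy
  have hzero : minimalDisplacement T C = 0 :=
    minimalDisplacement_eq_zero hCne hCcv hTC hT hlam fun u hu =>
      (hfar u hu).imp fun _ hη => hη.2
  obtain ⟨x₀, hx₀, hlt⟩ :=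
    exists_norm_apply_sub_lt_of_minimalDisplacement_lt hCne (hzero.trans_lt hlam)
  obtain ⟨η, hη, hx₀η⟩ := hfar x₀ hx₀
  exact ⟨x₀, hx₀, η, hη, fun y hy hyη =>
    (hx₀η y hy hyη).trans (sub_le_sub_left hlt.le _)⟩

/-- Proposition 1 (part): (C5) ⇒ (C6) for a nonexpansive mapping on a nonempty
closed convex subset of a Banach space. -/
theorem c5_implies_c6
    {E : Type*} [NormedAddCommGroup E] [NormedSpace ℝ E] [CompleteSpace E]
    (C : Set E) (hCne : C.Nonempty) (hCcl : IsClosed C) (hCcv : Convex ℝ C)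
    (T : E → E) (hTC : Set.MapsTo T C C)
    (hTne : ∀ x ∈ C, ∀ y ∈ C, ‖T x - T y‖ ≤ ‖x - y‖)
    (hC5 : ∃ lam > (0 : ℝ), ∀ x₁ ∈ C, ∃ η > (0 : ℝ),
      ∀ y ∈ C, η < ‖y‖ → ‖T x₁ - T y‖ ≤ ‖x₁ - y‖ - lam) :
    ∃ x₀ ∈ C, ∃ η > (0 : ℝ),
      ∀ y ∈ C, η < ‖y‖ → ‖T x₀ - T y‖ ≤ ‖x₀ - y‖ - ‖T x₀ - x₀‖ :=
  c5_implies_c6_general C hCne hCcv T hTC hTne hC5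
end

section
/- Let C be a closed convex subset of a Banach space E and let T be a nonexpansive mapping on C. Suppose there exist x₀ ∈ C and η > 0 such that ‖Tx₀ − Ty‖ ≤ ‖x₀ − y‖ − ‖Tx₀ − x₀‖ for all y ∈ C with ‖y‖ > η. Then there exists ρ > 0 such that T maps the set D = { y ∈ C : ‖y − x₀‖ ≤ ρ } into itself. -/
/-!
Condition (C6) absorbs the displacement of `x₀`: by the triangle inequality through `T x₀`, a point
satisfying it is not moved away from `x₀`. The remaining points form a bounded set on which `T` is
bounded, so a ball around `x₀` containing their images is invariant.
-/

open Filter Metric Set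

theorem isBounded_image_of_lipschitzOnWith {X Y : Type*} [PseudoMetricSpace X]
    [PseudoMetricSpace Y] {K : NNReal} {f : X → Y} {s : Set X} (hf : LipschitzOnWith K f s)
    (hs : Bornology.IsBounded s) : Bornology.IsBounded (f '' s) :=
  isBounded_image_iff.2 ⟨K * diam s, fun _ hx _ hy ↦ (hf.dist_le_mul _ hx _ hy).trans <|
    mul_le_mul_of_nonneg_left (dist_le_diam_of_mem hs hx hy) K.coe_nonneg⟩

theorem eventually_mapsTo_closedBall_of_dist_le {X : Type*} [PseudoMetricSpace X] {f : X → X}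
    {s t : Set X} {x : X} (ht : Bornology.IsBounded (f '' (s ∩ t)))
    (hf : ∀ y ∈ s, y ∉ t → dist (f y) x ≤ dist y x) :
    ∀ᶠ ρ in atTop, MapsTo f (s ∩ closedBall x ρ) (closedBall x ρ) := by
  obtain ⟨r, hr⟩ := (isBounded_iff_subset_closedBall x).1 ht
  filter_upwards [eventually_ge_atTop r] with ρ hrρ y ⟨hys, hyρ⟩
  by_cases hyt : y ∈ t
  · exact closedBall_subset_closedBall hrρ (hr (mem_image_of_mem f ⟨hys, hyt⟩))
  · exact (hf y hys hyt).trans hyρ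

theorem invariant_ball_of_c6_general {X : Type*} [PseudoMetricSpace X] {C B : Set X} {T : X → X}
    {x₀ : X} (hTC : MapsTo T C C) (hTB : Bornology.IsBounded (T '' (C ∩ B)))
    (hC6 : ∀ y ∈ C, y ∉ B → dist (T x₀) (T y) ≤ dist x₀ y - dist (T x₀) x₀) :
    ∀ᶠ ρ in atTop, MapsTo T {y ∈ C | dist y x₀ ≤ ρ} {y ∈ C | dist y x₀ ≤ ρ} := by
  have h_far : ∀ y ∈ C, y ∉ B → dist (T y) x₀ ≤ dist y x₀ := fun y hyC hyB ↦ calc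
    dist (T y) x₀ ≤ dist (T x₀) (T y) + dist (T x₀) x₀ := dist_triangle_left ..
    _ ≤ dist y x₀ := by linarith [hC6 y hyC hyB, dist_comm x₀ y]
  filter_upwards [eventually_mapsTo_closedBall_of_dist_le hTB h_far] with ρ hρ
  exact (hTC.mono_left inter_subset_left).inter hρ

/-- Lemma 1: if a nonexpansive mapping `T` on a closed convex subset `C` of a Banach
space satisfies (C6), then some closed ball of `C` around `x₀` is invariant under `T`. -/
theorem invariant_ball_of_c6
    {E : Type*} [NormedAddCommGroup E] [NormedSpace ℝ E] [CompleteSpace E]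
    (C : Set E) (hCcl : IsClosed C) (hCcv : Convex ℝ C)
    (T : E → E) (hTC : Set.MapsTo T C C)
    (hTne : ∀ x ∈ C, ∀ y ∈ C, ‖T x - T y‖ ≤ ‖x - y‖)
    (x₀ : E) (hx₀ : x₀ ∈ C) (η : ℝ) (hη : 0 < η)
    (hC6 : ∀ y ∈ C, η < ‖y‖ → ‖T x₀ - T y‖ ≤ ‖x₀ - y‖ - ‖T x₀ - x₀‖) :
    ∃ ρ > (0 : ℝ),
      Set.MapsTo T {y ∈ C | ‖y - x₀‖ ≤ ρ} {y ∈ C | ‖y - x₀‖ ≤ ρ} := by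
  have hTB : Bornology.IsBounded (T '' (C ∩ closedBall 0 η)) :=
    isBounded_image_of_lipschitzOnWith
      (.mono (.mk_one (by simpa only [dist_eq_norm] using hTne)) inter_subset_left)
      (isBounded_closedBall.subset inter_subset_right)
  have h := invariant_ball_of_c6_general hTC hTB
    (by simpa only [dist_eq_norm, mem_closedBall_zero_iff, not_le] using hC6)
  simpa only [dist_eq_norm] using ((eventually_gt_atTop 0).and h).exists
end

section
/- Let C be a nonempty closed convex subset of a Banach space E and assume that C has the fixed point property for nonexpansive mappings (FPP). Let T be a nonexpansive mapping on C. Then T has a fixed point in C if and only if T satisfies condition (C6). -/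
/-!
A fixed point `z` serves as the point `x₀` of (C6), because the term `‖T z - z‖` vanishes.
Conversely, if `x₀` and `η` witness (C6), the triangle inequality
`‖x₀ - T y‖ ≤ ‖T x₀ - x₀‖ + ‖T x₀ - T y‖` shows that `T` does not move points of norm greater
than `η` away from `x₀`, while it carries the remaining points of `C` to within
`‖x₀‖ + η + ‖T x₀ - x₀‖` of `x₀`. The part of `C` in the closed ball of that radius about `x₀`
is therefore invariant under `T`, and the fixed point property applies to it.
-/

open Bornology Function Metric Set

section Seminormed

variable {E : Type*} [SeminormedAddCommGroup E] {C : Set E} {T : E → E}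

lemma lipschitzOnWith_one_iff_norm_sub_le {F : Type*} [SeminormedAddCommGroup F] {f : E → F} :
    LipschitzOnWith 1 f C ↔ ∀ x ∈ C, ∀ y ∈ C, ‖f x - f y‖ ≤ ‖x - y‖ := by
  simp only [lipschitzOnWith_iff_norm_sub_le, NNReal.coe_one, one_mul]

/-- Condition (C6) for a mapping `T` on `C`. The mapping is encoded as a function on the whole
space, of which only the values on `C` matter. -/
def ConditionC6 (T : E → E) (C : Set E) : Prop :=
  ∃ x₀ ∈ C, ∃ η > (0 : ℝ), ∀ y ∈ C, η < ‖y‖ → ‖T x₀ - T y‖ ≤ ‖x₀ - y‖ - ‖T x₀ - x₀‖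

lemma ConditionC6.of_isFixedPt {z : E} (hT : LipschitzOnWith 1 T C) (hz : z ∈ C)
    (hTz : IsFixedPt T z) : ConditionC6 T C := by
  refine ⟨z, hz, 1, one_pos, fun y hy _ ↦ ?_⟩
  calc
    ‖T z - T y‖ ≤ ‖z - y‖ := lipschitzOnWith_one_iff_norm_sub_le.1 hT z hz y hy
    _ = ‖z - y‖ - ‖T z - z‖ := by rw [hTz.eq, sub_self, norm_zero, sub_zero]

lemma mapsTo_inter_closedBall_of_norm_sub_le {x₀ : E} {η R : ℝ} (hTC : MapsTo T C C)
    (hT : LipschitzOnWith 1 T C) (hx₀ : x₀ ∈ C)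
    (hfar : ∀ y ∈ C, η < ‖y‖ → ‖T x₀ - T y‖ ≤ ‖x₀ - y‖ - ‖T x₀ - x₀‖)
    (hR : ‖x₀‖ + η + ‖T x₀ - x₀‖ ≤ R) :
    MapsTo T (C ∩ closedBall x₀ R) (C ∩ closedBall x₀ R) := by
  rintro y ⟨hyC, hyR⟩
  refine ⟨hTC hyC, ?_⟩
  rw [mem_closedBall_iff_norm'] at hyR ⊢
  have htri : ‖x₀ - T y‖ ≤ ‖T x₀ - x₀‖ + ‖T x₀ - T y‖ := by
    rw [norm_sub_rev (T x₀) x₀]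
    exact norm_sub_le_norm_sub_add_norm_sub x₀ (T x₀) (T y)
  obtain hy | hy := lt_or_ge η ‖y‖
  · calc
      ‖x₀ - T y‖ ≤ ‖x₀ - y‖ := by linarith [hfar y hyC hy]
      _ ≤ R := hyR
  · have hTy : ‖T x₀ - T y‖ ≤ ‖x₀‖ + η := calc
      ‖T x₀ - T y‖ ≤ ‖x₀ - y‖ := lipschitzOnWith_one_iff_norm_sub_le.1 hT x₀ hx₀ y hyC
      _ ≤ ‖x₀‖ + ‖y‖ := norm_sub_le x₀ y
      _ ≤ ‖x₀‖ + η := by gcongr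
    linarith

end Seminormed

section Normed

variable {E : Type*} [NormedAddCommGroup E] [NormedSpace ℝ E] {C : Set E} {T : E → E}

/-- The fixed point property for nonexpansive mappings (FPP): every nonexpansive self-map of a
nonempty bounded closed convex subset of `C` has a fixed point. Nonexpansive self-maps of `D` are
encoded as functions on the whole space that preserve `D` and are 1-Lipschitz on it. -/
def HasFixedPointProperty (C : Set E) : Prop :=
  ∀ D ⊆ C, D.Nonempty → IsBounded D → IsClosed D → Convex ℝ D →
    ∀ S : E → E, MapsTo S D D → LipschitzOnWith 1 S D → ∃ z ∈ D, IsFixedPt S z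

lemma HasFixedPointProperty.exists_isFixedPt_of_mapsTo_inter_closedBall {x₀ : E} {R : ℝ}
    (hC : HasFixedPointProperty C) (hCcl : IsClosed C) (hCcv : Convex ℝ C)
    (hne : (C ∩ closedBall x₀ R).Nonempty)
    (hT : LipschitzOnWith 1 T (C ∩ closedBall x₀ R))
    (hmaps : MapsTo T (C ∩ closedBall x₀ R) (C ∩ closedBall x₀ R)) :
    ∃ z ∈ C ∩ closedBall x₀ R, IsFixedPt T z :=
  hC _ inter_subset_left hne (isBounded_closedBall.subset inter_subset_right)
    (hCcl.inter isClosed_closedBall) (hCcv.inter (convex_closedBall x₀ R)) T hmaps hT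

theorem fixedPoint_iff_c6_of_fpp_general (hCcl : IsClosed C) (hCcv : Convex ℝ C)
    (hC : HasFixedPointProperty C) (hTC : MapsTo T C C) (hT : LipschitzOnWith 1 T C) :
    (∃ z ∈ C, IsFixedPt T z) ↔ ConditionC6 T C := by
  constructor
  · rintro ⟨z, hz, hTz⟩
    exact .of_isFixedPt hT hz hTz
  · rintro ⟨x₀, hx₀, η, hη, hfar⟩
    have hR : 0 ≤ ‖x₀‖ + η + ‖T x₀ - x₀‖ := by positivity
    obtain ⟨z, hz, hTz⟩ := hC.exists_isFixedPt_of_mapsTo_inter_closedBall hCcl hCcv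
      ⟨x₀, hx₀, mem_closedBall_self hR⟩ (hT.mono inter_subset_left)
      (mapsTo_inter_closedBall_of_norm_sub_le hTC hT hx₀ hfar le_rfl)
    exact ⟨z, hz.1, hTz⟩

end Normed

/-- Proposition 3: if a nonempty closed convex subset `C` of a Banach space has the
fixed point property for nonexpansive mappings, then a nonexpansive mapping `T` on `C`
has a fixed point iff it satisfies (C6). -/
theorem fixedPoint_iff_c6_of_fpp
    {E : Type*} [NormedAddCommGroup E] [NormedSpace ℝ E] [CompleteSpace E]
    (C : Set E) (hCne : C.Nonempty) (hCcl : IsClosed C) (hCcv : Convex ℝ C)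
    (hFPP : ∀ D : Set E, D ⊆ C → D.Nonempty → Bornology.IsBounded D → IsClosed D →
      Convex ℝ D → ∀ S : E → E, Set.MapsTo S D D →
      (∀ x ∈ D, ∀ y ∈ D, ‖S x - S y‖ ≤ ‖x - y‖) → ∃ z ∈ D, S z = z)
    (T : E → E) (hTC : Set.MapsTo T C C)
    (hTne : ∀ x ∈ C, ∀ y ∈ C, ‖T x - T y‖ ≤ ‖x - y‖) :
    (∃ z ∈ C, T z = z) ↔
      (∃ x₀ ∈ C, ∃ η > (0 : ℝ),
        ∀ y ∈ C, η < ‖y‖ → ‖T x₀ - T y‖ ≤ ‖x₀ - y‖ - ‖T x₀ - x₀‖) := by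
  simp only [← lipschitzOnWith_one_iff_norm_sub_le] at hFPP hTne
  exact fixedPoint_iff_c6_of_fpp_general hCcl hCcv hFPP hTC hTne
end

section
/- Let E = c₀ be the Banach space of real sequences converging to 0 with the supremum norm, and let C = { x ∈ c₀ : 0 ≤ x(n) ≤ n for all n ∈ ℕ }, a closed convex subset of E. Define T on C by (Tx)(n) = max{0, x(n) − 2} for all n ∈ ℕ. Then T is a nonexpansive mapping on C, T satisfies condition (C5), and T does not satisfy condition (C3). -/
open ZeroAtInfty

/-!
Subtracting `a` and cutting off at `0` shortens a large difference `x - y` by almost `a`: outside a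
compact set `x` is below `a - lam`, hence sent to `0`, while `y` loses `a`; on the compact set
`|x - y|` is at most the bound `w` of the box, so it stays well below a large norm `‖x - y‖`.
The norm of a nonnegative function never drops by more than `a`, which, compared with the fixed
point `0`, rules out every `lam > a`.
-/

open Bornology

section Truncation

variable {R : Type*} [AddCommGroup R] [LinearOrder R] [IsOrderedAddMonoid R]

lemma abs_max_zero_sub_sub_max_zero_sub_le (a s t : R) :
    |max 0 (s - a) - max 0 (t - a)| ≤ |s - t| := by
  simpa only [max_comm, sub_sub_sub_cancel_right] using abs_max_sub_max_le_abs (s - a) (t - a) 0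

lemma abs_max_zero_sub_sub_max_zero_sub_le_sub {a lam r s t : R} (hlam : 0 ≤ lam)
    (hs : s ≤ a - lam) (hr : lam ≤ r) (hst : |s - t| ≤ r) :
    |max 0 (s - a) - max 0 (t - a)| ≤ r - lam := by
  have hsa : s - a ≤ 0 := sub_nonpos.2 (hs.trans (sub_le_self a hlam))
  have hta : t - a ≤ r - lam :=
    calc t - a = (t - s) + (s - a) := (sub_add_sub_cancel t s a).symm
      _ ≤ r + -lam := add_le_add ((neg_sub s t ▸ neg_le_abs (s - t)).trans hst)
          (by rwa [sub_le_iff_le_add, neg_add_eq_sub])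
      _ = r - lam := (sub_eq_add_neg r lam).symm
  rw [max_eq_left hsa, zero_sub, abs_neg, abs_of_nonneg (le_max_left _ _)]
  exact max_le (sub_nonneg.2 hr) hta

end Truncation

section SupNorm

variable {X β : Type*} [TopologicalSpace X] [SeminormedAddCommGroup β]

lemma c0_norm_apply_le_norm (f : C₀(X, β)) (p : X) : ‖f p‖ ≤ ‖f‖ :=
  f.toBCF.norm_coe_le_norm p

lemma c0_norm_le_of_forall_norm_apply_le {f : C₀(X, β)} {r : ℝ} (hr : 0 ≤ r)
    (h : ∀ p, ‖f p‖ ≤ r) : ‖f‖ ≤ r :=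
  (BoundedContinuousFunction.norm_le hr).2 h

end SupNorm

/-- The map `T` brings every `x ∈ C` closer by at least `lam` to all points of `C` far from the
origin. Condition (C3) asks for this for all `lam > 0`, condition (C5) for some `lam > 0`. -/
def ContractsFarPointsBy {E : Type*} [SeminormedAddCommGroup E] (T : E → E) (C : Set E)
    (lam : ℝ) : Prop :=
  ∀ x ∈ C, ∃ η > (0 : ℝ), ∀ y ∈ C, η < ‖y‖ → ‖T x - T y‖ ≤ ‖x - y‖ - lam

section Box

variable {X : Type*} [TopologicalSpace X]

/-- The order interval from `0` to `w` in `C₀(X, ℝ)`; the bound `w` itself need neither be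
continuous nor vanish at infinity. -/
def c0Box (w : X → ℝ) : Set C₀(X, ℝ) :=
  {x | ∀ p, 0 ≤ x p ∧ x p ≤ w p}

/-- On `C`, the map `T` lowers all values of a function by `a` and truncates at `0`. This is a
predicate because `T` may take arbitrary values outside `C`. -/
def IsTruncatedShiftOn (a : ℝ) (T : C₀(X, ℝ) → C₀(X, ℝ)) (C : Set C₀(X, ℝ)) : Prop :=
  ∀ x ∈ C, ∀ p, T x p = max 0 (x p - a)

variable {w : X → ℝ} {a lam : ℝ} {T : C₀(X, ℝ) → C₀(X, ℝ)} {C : Set C₀(X, ℝ)} {x y : C₀(X, ℝ)}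

lemma abs_sub_le_of_mem_c0Box (hx : x ∈ c0Box w) (hy : y ∈ c0Box w) (p : X) :
    |x p - y p| ≤ w p :=
  abs_sub_le_of_nonneg_of_le (hx p).1 (hx p).2 (hy p).1 (hy p).2

lemma zero_mem_c0Box_of_nonempty (h : (c0Box w).Nonempty) : (0 : C₀(X, ℝ)) ∈ c0Box w := by
  obtain ⟨x, hx⟩ := h
  exact fun p => ⟨le_rfl, (hx p).1.trans (hx p).2⟩

namespace IsTruncatedShiftOn

lemma mapsTo_c0Box (hT : IsTruncatedShiftOn a T (c0Box w)) (ha : 0 ≤ a) :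
    Set.MapsTo T (c0Box w) (c0Box w) := by
  intro x hx p
  obtain ⟨hx₀, hxw⟩ := hx p
  rw [hT x hx]
  exact ⟨le_max_left _ _, max_le (hx₀.trans hxw) ((sub_le_self _ ha).trans hxw)⟩

lemma norm_sub_le (hT : IsTruncatedShiftOn a T C) (hx : x ∈ C) (hy : y ∈ C) :
    ‖T x - T y‖ ≤ ‖x - y‖ := by
  refine c0_norm_le_of_forall_norm_apply_le (norm_nonneg _) fun p => ?_
  rw [ZeroAtInftyContinuousMap.sub_apply, hT x hx, hT y hy]
  exact (abs_max_zero_sub_sub_max_zero_sub_le _ _ _).trans (c0_norm_apply_le_norm (x - y) p)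

lemma map_zero (hT : IsTruncatedShiftOn a T C) (h₀ : 0 ∈ C) (ha : 0 ≤ a) : T 0 = 0 := by
  ext p
  rw [hT 0 h₀, ZeroAtInftyContinuousMap.zero_apply, zero_sub, max_eq_left (neg_nonpos.2 ha)]

lemma norm_le_norm_map_add (hT : IsTruncatedShiftOn a T C) (ha : 0 ≤ a) (hx : x ∈ C)
    (hx₀ : ∀ p, 0 ≤ x p) : ‖x‖ ≤ ‖T x‖ + a := by
  refine c0_norm_le_of_forall_norm_apply_le (by positivity) fun p => ?_
  calc ‖x p‖ = x p := Real.norm_of_nonneg (hx₀ p)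
    _ ≤ T x p + a := by rw [hT x hx, ← sub_le_iff_le_add]; exact le_max_right _ _
    _ ≤ ‖T x‖ + a := by gcongr; exact (Real.le_norm_self _).trans (c0_norm_apply_le_norm (T x) p)

lemma contractsFarPointsBy (hT : IsTruncatedShiftOn a T (c0Box w))
    (hw : ∀ K, IsCompact K → BddAbove (w '' K)) (hlam : 0 < lam) (hlam_lt : lam < a) :
    ContractsFarPointsBy T (c0Box w) lam := by
  intro x hx
  obtain ⟨K, hK, hxK⟩ := Filter.mem_cocompact.1
    (x.zero_at_infty'.eventually_lt_const (sub_pos.2 hlam_lt))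
  obtain ⟨M, hM⟩ := hw K hK
  refine ⟨‖x‖ + |M| + lam, by positivity, fun y hy hlt => ?_⟩
  have hfar : |M| + lam ≤ ‖x - y‖ := by
    linarith [norm_sub_norm_le y x, norm_sub_rev x y]
  have hlam_le : lam ≤ ‖x - y‖ := (le_add_of_nonneg_left (abs_nonneg M)).trans hfar
  refine c0_norm_le_of_forall_norm_apply_le (sub_nonneg.2 hlam_le) fun p => ?_
  rw [ZeroAtInftyContinuousMap.sub_apply, hT x hx, hT y hy, Real.norm_eq_abs]
  by_cases hp : p ∈ K
  · calc |max 0 (x p - a) - max 0 (y p - a)| ≤ |x p - y p| :=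
          abs_max_zero_sub_sub_max_zero_sub_le _ _ _
      _ ≤ w p := abs_sub_le_of_mem_c0Box hx hy p
      _ ≤ |M| := (hM ⟨p, hp, rfl⟩).trans (le_abs_self M)
      _ ≤ ‖x - y‖ - lam := le_sub_iff_add_le.2 hfar
  · have hxp : x p < a - lam := hxK hp
    exact abs_max_zero_sub_sub_max_zero_sub_le_sub hlam.le hxp.le hlam_le
      (c0_norm_apply_le_norm (x - y) p)

lemma not_contractsFarPointsBy (hT : IsTruncatedShiftOn a T C) (ha : 0 ≤ a) (h₀ : 0 ∈ C)
    (hC : ∀ x ∈ C, ∀ p, 0 ≤ x p) (hunb : ¬ IsBounded C) (hlam : a < lam) :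
    ¬ ContractsFarPointsBy T C lam := by
  intro h
  obtain ⟨η, -, hη⟩ := h 0 h₀
  obtain ⟨y, hy, hηy⟩ : ∃ y ∈ C, η < ‖y‖ := by
    by_contra! hbdd
    exact hunb (isBounded_iff_forall_norm_le.2 ⟨η, hbdd⟩)
  have hupper : ‖T y‖ ≤ ‖y‖ - lam := by
    simpa only [hT.map_zero h₀ ha, zero_sub, norm_neg] using hη y hy hηy
  linarith [hT.norm_le_norm_map_add ha hy (hC y hy)]

end IsTruncatedShiftOn

theorem example_c0_c5_not_c3_general (hw : ∀ K, IsCompact K → BddAbove (w '' K))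
    (hunb : ¬ IsBounded (c0Box w)) (ha : 0 < a) (hT : IsTruncatedShiftOn a T (c0Box w)) :
    Set.MapsTo T (c0Box w) (c0Box w) ∧
    (∀ x ∈ c0Box w, ∀ y ∈ c0Box w, ‖T x - T y‖ ≤ ‖x - y‖) ∧
    (∃ lam > (0 : ℝ), ContractsFarPointsBy T (c0Box w) lam) ∧
    ¬ ∀ lam > (0 : ℝ), ContractsFarPointsBy T (c0Box w) lam := by
  have h₀ : (0 : C₀(X, ℝ)) ∈ c0Box w :=
    zero_mem_c0Box_of_nonempty (nonempty_of_not_isBounded hunb)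
  refine ⟨hT.mapsTo_c0Box ha.le, fun x hx y hy => hT.norm_sub_le hx hy,
    ⟨a / 2, half_pos ha, hT.contractsFarPointsBy hw (half_pos ha) (half_lt_self ha)⟩, fun h => ?_⟩
  exact hT.not_contractsFarPointsBy ha.le h₀ (fun x hx p => (hx p).1) hunb (lt_add_one a)
    (h (a + 1) (by positivity))

end Box

section Discrete

variable {X : Type*} [TopologicalSpace X] [DiscreteTopology X] {w : X → ℝ}

/-- The function with value `b` at `p` and `0` elsewhere, as an element of `C₀(X, β)`; with
`b = w p` it witnesses that `c0Box w` contains functions of norm at least `w p`. -/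
def c0Single {β : Type*} [TopologicalSpace β] [Zero β] [DecidableEq X] (p : X) (b : β) :
    C₀(X, β) where
  toFun := Pi.single p b
  continuous_toFun := continuous_of_discreteTopology
  zero_at_infty' := by
    refine tendsto_const_nhds.congr' ?_
    filter_upwards [isCompact_singleton.compl_mem_cocompact] with q hq
    exact (Pi.single_eq_of_ne (M := fun _ => β) hq b).symm

lemma c0Single_apply {β : Type*} [TopologicalSpace β] [Zero β] [DecidableEq X] (p : X) (b : β)
    (q : X) : c0Single p b q = if q = p then b else 0 :=
  Pi.single_apply p b q

lemma c0Single_mem_c0Box [DecidableEq X] (hw : 0 ≤ w) (p : X) :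
    c0Single p (w p) ∈ c0Box w := by
  intro q
  rw [c0Single_apply]
  split_ifs with hq
  · exact hq ▸ ⟨hw q, le_rfl⟩
  · exact ⟨le_rfl, hw q⟩

lemma not_isBounded_c0Box (hw : 0 ≤ w) (hunb : ¬ BddAbove (Set.range w)) :
    ¬ IsBounded (c0Box w) := by
  classical
  intro hbdd
  obtain ⟨M, hM⟩ := isBounded_iff_forall_norm_le.1 hbdd
  refine hunb ⟨M, Set.forall_mem_range.2 fun p => ?_⟩
  calc w p = c0Single p (w p) p := by rw [c0Single_apply, if_pos rfl]
    _ ≤ ‖c0Single p (w p)‖ := (Real.le_norm_self _).trans (c0_norm_apply_le_norm _ p)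
    _ ≤ M := hM _ (c0Single_mem_c0Box hw p)

end Discrete

/-- Example 2: in `c₀` (real sequences converging to `0`, with the supremum norm), let
`C = { x : 0 ≤ x n ≤ n for all n }` and let `T` be given on `C` by
`(T x) n = max 0 (x n − 2)`.  Then `T` maps `C` into `C`, is nonexpansive on `C`,
satisfies (C5), and does not satisfy (C3). -/
theorem example_c0_c5_not_c3
    (C : Set C₀(ℕ, ℝ)) (hC : C = {x : C₀(ℕ, ℝ) | ∀ n : ℕ, 0 ≤ x n ∧ x n ≤ n})
    (T : C₀(ℕ, ℝ) → C₀(ℕ, ℝ)) (hT : ∀ x ∈ C, ∀ n : ℕ, T x n = max 0 (x n - 2)) :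
    Set.MapsTo T C C ∧
    (∀ x ∈ C, ∀ y ∈ C, ‖T x - T y‖ ≤ ‖x - y‖) ∧
    (∃ lam > (0 : ℝ), ∀ x₁ ∈ C, ∃ η > (0 : ℝ),
      ∀ y ∈ C, η < ‖y‖ → ‖T x₁ - T y‖ ≤ ‖x₁ - y‖ - lam) ∧
    ¬ (∀ lam > (0 : ℝ), ∀ x₁ ∈ C, ∃ η > (0 : ℝ),
      ∀ y ∈ C, η < ‖y‖ → ‖T x₁ - T y‖ ≤ ‖x₁ - y‖ - lam) := by
  subst hC
  have hunb : ¬ IsBounded (c0Box (Nat.cast : ℕ → ℝ)) :=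
    not_isBounded_c0Box (fun n => n.cast_nonneg)
      (Filter.not_bddAbove_of_tendsto_atTop tendsto_natCast_atTop_atTop)
  exact example_c0_c5_not_c3_general
    (fun K hK => (hK.finite_of_discrete.image _).bddAbove) hunb two_pos hT
end
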